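/- arXiv:2503.19561 — 10 statements merged into one kernel-verified Lean document; each statement's English description precedes it below -/
import Mathlib

section
/- If there exists a path-complete barrier function (G, {B_v : v ∈ V}) for a discrete-time switched system S with respect to an initial set X0 and an unsafe set Xu, then S satisfies the safety specification Safe(X0, Xu). -/
open Matrix

/-- Trajectory of a time-varying discrete-time dynamical system:
`traj f x0 0 = x0` and `traj f x0 (t+1) = f t (traj f x0 t)`. -/
def traj {S : Type*} (f : ℕ → S → S) (x0 : S) : ℕ → S
  | 0 => x0
  | t + 1 => f t (traj f x0 t)

/-- If there exists a path-complete barrier function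
`(G, {B_v : v ∈ V})` for a discrete-time switched system `S` (modes `f σ`
on state set `X ⊆ ℝⁿ`) with respect to an initial set `X0` and an unsafe
set `Xu`, then `S` satisfies the safety specification `Safe(X0, Xu)`. -/
theorem pcbf_implies_safety {n : ℕ} {A V : Type} [Fintype A] [Fintype V]
    (f : A → (Fin n → ℝ) → (Fin n → ℝ))
    (X X0 Xu : Set (Fin n → ℝ))
    (hX0 : X0 ⊆ X) (hXu : Xu ⊆ X)
    (hf : ∀ σ : A, Set.MapsTo (f σ) X X)
    (E : Set (V × A × V))
    (hpc : ∀ k : ℕ, 1 ≤ k → ∀ w : Fin k → A,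
      ∃ v : Fin (k + 1) → V, ∀ i : Fin k, (v i.castSucc, w i, v i.succ) ∈ E)
    (B : V → (Fin n → ℝ) → ℝ)
    (hB0 : ∀ v : V, ∀ x ∈ X0, B v x ≤ 0)
    (hBu : ∀ v : V, ∀ x ∈ Xu, 0 < B v x)
    (hBe : ∀ e ∈ E, ∀ x ∈ X, B e.2.2 (f e.2.1 x) ≤ B e.1 x) :
    ∀ x0 ∈ X0, ∀ σ : ℕ → A, ∀ t : ℕ, traj (fun s x => f (σ s) x) x0 t ∉ Xu := by
  intro x0 hx0 σ t ht
  obtain ⟨v, hv⟩ := hpc (t + 1) (by omega) (fun i => σ i)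
  have key : ∀ s : ℕ, ∀ hs : s < t + 1 + 1,
      traj (fun s x => f (σ s) x) x0 s ∈ X ∧
        B (v ⟨s, hs⟩) (traj (fun s x => f (σ s) x) x0 s) ≤ 0 := by
    intro s
    induction s with
    | zero => exact fun hs => ⟨hX0 hx0, hB0 _ _ hx0⟩
    | succ s ih =>
      intro hs
      obtain ⟨h1, h2⟩ := ih (by omega)
      exact ⟨hf _ h1, (hBe _ (hv ⟨s, by omega⟩) _ h1).trans h2⟩
  exact absurd (hBu _ _ ht) (not_lt.mpr (key t (by omega)).2)
end

section
/- For any graph G_np = (V_np, E_np) over a finite alphabet Σ that is not path-complete, there exist a dimension n, a discrete-time switched system S_np over Σ on ℝ^n with linear modes, and sets X0, Xu ⊆ ℝ^n such that: (1) S_np violates Safe(X0, Xu), i.e., some trajectory starting in X0 enters Xu; and (2) there exists an admissible graph-based barrier function (G_np, {B_v : v ∈ V_np}) for S_np, X0, Xu, i.e., functions B_v : ℝ^n → ℝ satisfying B_v(x) ≤ 0 for all x ∈ X0 and v ∈ V_np, B_v(x) > 0 for all x ∈ Xu and v ∈ V_np, and B_{v'}(A_σ x) ≤ B_v(x) for all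 x ∈ ℝ^n and all (v, σ, v') ∈ E_np. -/
open Matrix

/-- Standard basis vector indexed by a natural number. -/
def npcE (k i : ℕ) : Fin (k + 1) → ℝ := fun j => if j.val = i then 1 else 0

/-- Shift matrix activated by reading the right letter. -/
noncomputable def npcM {A : Type} (k : ℕ) (W : ℕ → A) (a : A) :
    Matrix (Fin (k + 1)) (Fin (k + 1)) ℝ :=
  open Classical in
  Matrix.of fun r c => if r.val = c.val + 1 ∧ W c.val = a then 1 else 0

/-- `(v, x)` can reach the target vector along the edges of the graph. -/
inductive NpcReach {V A : Type} (E : Set (V × A × V)) (k : ℕ) (W : ℕ → A) :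
    V → (Fin (k + 1) → ℝ) → Prop
  | base (v : V) : NpcReach E k W v (npcE k k)
  | step (v : V) (a : A) (v' : V) (x : Fin (k + 1) → ℝ) (h : (v, a, v') ∈ E)
      (hr : NpcReach E k W v' (npcM k W a *ᵥ x)) : NpcReach E k W v x

lemma npcE_inj {k i : ℕ} (hi : i ≤ k) {j : ℕ} (h : npcE k i = npcE k j) : i = j := by
  have := congrFun h ⟨i, by omega⟩
  by_contra hne
  simp [npcE, hne] at this

lemma npcE_ne {k i : ℕ} (hi : i ≤ k) : npcE k i ≠ 0 := by
  intro h
  have := congrFun h ⟨i, by omega⟩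
  simp [npcE] at this

lemma npcM_apply {A : Type} {k : ℕ} (W : ℕ → A) (a : A) {i : ℕ} (hi : i ≤ k)
    (r : Fin (k + 1)) :
    (npcM k W a *ᵥ npcE k i) r = npcM k W a r ⟨i, by omega⟩ := by
  have : npcE k i = Pi.single (⟨i, by omega⟩ : Fin (k + 1)) (1 : ℝ) := by
    ext j
    simp [npcE, Pi.single_apply, Fin.ext_iff]
  rw [this]
  simp

lemma npcM_same {A : Type} {k : ℕ} (W : ℕ → A) {i : ℕ} (hi : i ≤ k) :
    npcM k W (W i) *ᵥ npcE k i = npcE k (i + 1) := by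
  ext r
  rw [npcM_apply W _ hi]
  simp [npcM, npcE]

lemma npcM_diff {A : Type} {k : ℕ} (W : ℕ → A) {a : A} {i : ℕ} (hi : i ≤ k)
    (h : i = k ∨ W i ≠ a) :
    npcM k W a *ᵥ npcE k i = 0 := by
  ext r
  rw [npcM_apply W _ hi]
  have := r.isLt
  simp only [npcM, Matrix.of_apply, Pi.zero_apply]
  rw [if_neg]
  rintro ⟨h1, h2⟩
  rcases h with h | h
  · omega
  · exact h h2

lemma npcReach_path {V A : Type} {E : Set (V × A × V)} {k : ℕ} {W : ℕ → A} {v : V}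
    {x : Fin (k + 1) → ℝ} (h : NpcReach E k W v x) :
    x ≠ 0 ∧ ∀ i, i ≤ k → x = npcE k i →
      ∃ p : ℕ → V, p i = v ∧ ∀ j, i ≤ j → j < k → (p j, W j, p (j + 1)) ∈ E := by
  induction h with
  | base v =>
    refine ⟨npcE_ne le_rfl, fun i hi hx => ⟨fun _ => v, rfl, fun j h1 h2 => ?_⟩⟩
    have := npcE_inj le_rfl hx
    omega
  | step v a v' x h hr ih =>
    obtain ⟨h0, ih⟩ := ih
    refine ⟨fun hx => h0 (by rw [hx, Matrix.mulVec_zero]), fun i hi hx => ?_⟩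
    subst hx
    by_cases hc : i = k ∨ W i ≠ a
    · exact absurd (npcM_diff W hi hc) h0
    · push Not at hc
      obtain ⟨hik, rfl⟩ := hc
      obtain ⟨p, hp, hpe⟩ := ih (i + 1) (by omega) (npcM_same W hi)
      refine ⟨Function.update p i v, by simp, fun j h1 h2 => ?_⟩
      have hj : j + 1 ≠ i := by omega
      rw [Function.update_of_ne hj]
      by_cases hji : j = i
      · subst hji
        rw [Function.update_self, hp]
        exact h
      · rw [Function.update_of_ne hji]
        exact hpe j (by omega) h2

/-- Necessity of path-completeness: for any graph `(V, E)` over a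
finite alphabet that is not path-complete, there exist a dimension `n`, a
switched linear system `x(t+1) = A_{σ(t)} x(t)` on `ℝⁿ`, and sets `X0, Xu ⊆ ℝⁿ`
such that (1) the system violates `Safe(X0, Xu)` (some trajectory starting in
`X0` enters `Xu`); and (2) there is an admissible graph-based barrier function
`(G, {B_v})` for the system, `X0` and `Xu`. -/
theorem nonpathcomplete_counterexample {V A : Type} [Fintype V] [Fintype A]
    (E : Set (V × A × V))
    (hnpc : ¬ ∀ k : ℕ, 1 ≤ k → ∀ w : Fin k → A,
      ∃ v : Fin (k + 1) → V, ∀ i : Fin k, (v i.castSucc, w i, v i.succ) ∈ E) :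
    ∃ (n : ℕ) (M : A → Matrix (Fin n) (Fin n) ℝ)
      (X0 Xu : Set (Fin n → ℝ)) (B : V → (Fin n → ℝ) → ℝ),
      (∃ x0 ∈ X0, ∃ σ : ℕ → A, ∃ t : ℕ,
        traj (fun s x => M (σ s) *ᵥ x) x0 t ∈ Xu) ∧
      (∀ v : V, ∀ x ∈ X0, B v x ≤ 0) ∧
      (∀ v : V, ∀ x ∈ Xu, 0 < B v x) ∧
      (∀ e ∈ E, ∀ x : Fin n → ℝ, B e.2.2 (M e.2.1 *ᵥ x) ≤ B e.1 x) := by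
  classical
  push Not at hnpc
  obtain ⟨k, hk, w, hw⟩ := hnpc
  let W : ℕ → A := fun j => if h : j < k then w ⟨j, h⟩ else w ⟨0, hk⟩
  refine ⟨k + 1, npcM k W, {npcE k 0}, {npcE k k},
    fun v x => if NpcReach E k W v x then 1 else 0, ?_, ?_, ?_, ?_⟩
  · refine ⟨_, rfl, W, k, ?_⟩
    have key : ∀ t, t ≤ k →
        traj (fun s x => npcM k W (W s) *ᵥ x) (npcE k 0) t = npcE k t := by
      intro t
      induction t with
      | zero => intro _; rfl
      | succ t ih =>
        intro ht
        rw [traj, ih (by omega)]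
        exact npcM_same W (by omega)
    exact key k le_rfl
  · rintro v x rfl
    beta_reduce
    rw [if_neg]
    intro hr
    obtain ⟨p, -, hp⟩ := (npcReach_path hr).2 0 (by omega) rfl
    obtain ⟨i, hi⟩ := hw (fun j => p j.val)
    apply hi
    have := hp i.val (by omega) i.isLt
    simpa [W] using this
  · rintro v x rfl
    simp [NpcReach.base v]
  · rintro ⟨v, a, v'⟩ he x
    by_cases h : NpcReach E k W v' (npcM k W a *ᵥ x)
    · simp [h, NpcReach.step v a v' x he h]
    · simp only [h, if_false]
      split_ifs <;> norm_num
end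

section
/- Let σ_k = (σ0,…,σ_{k−1}) ∈ Σ^k with k ≥ 1, set n = k+1, and let A_σ = 2Â_σ be the constructed matrices. Then for the initial condition x0 = (1/2^k) e_1 (where e_1 is the first canonical basis vector, so that Σ_i x0[i]² = 1/4^k ≤ 1/4^k, i.e., x0 ∈ X0) and any switching sequence σ : ℕ → Σ whose first k letters are σ0,…,σ_{k−1}, the trajectory satisfies x(k) = A_{σ_{k−1}} ⋯ A_{σ_0} x0 = e_{k+1}, the last canonical basis vector; in particular Σ_i x(k)[i]² = 1 ≥ 1, so x(k) ∈ Xu and the system violates Safe(X0, Xu), where X0 = {x ∈ ℝ^n : Σ_{i=1}^n x[i]² ≤ 1/4^k} and Xu = {x ∈ ℝ^n : Σ_{i=1}^n x[i]² ≥ 1}. -/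
open Matrix

open scoped Classical in
/-- The binary matrix `Â_σ ∈ ℝ^{(k+1)×(k+1)}` built from the word `w ∈ Σ^k`
(0-indexed): `Â_σ[i,j] = 1` iff `w j = σ` and `i = j + 1`. -/
noncomputable def Ahat {k : ℕ} {A : Type} (w : Fin k → A) (σ : A) :
    Matrix (Fin (k + 1)) (Fin (k + 1)) ℝ :=
  Matrix.of fun i j =>
    if ∃ hj : (j : ℕ) < k, w ⟨(j : ℕ), hj⟩ = σ ∧ (i : ℕ) = (j : ℕ) + 1
    then (1 : ℝ) else 0

/-- `A_σ = 2 Â_σ`. -/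
noncomputable def Amat {k : ℕ} {A : Type} (w : Fin k → A) (σ : A) :
    Matrix (Fin (k + 1)) (Fin (k + 1)) ℝ :=
  (2 : ℝ) • Ahat w σ

theorem traj_step_aux {k : ℕ} {A : Type}
    (w : Fin k → A) (σ : ℕ → A) (hσ : ∀ i : Fin k, σ (i : ℕ) = w i) (t : ℕ) (ht : t ≤ k) :
    traj (fun s x => Amat w (σ s) *ᵥ x)
      (fun i : Fin (k + 1) => if (i : ℕ) = 0 then (1 : ℝ) / 2 ^ k else 0) t
      = fun i : Fin (k + 1) => if (i : ℕ) = t then (2 : ℝ) ^ t / 2 ^ k else 0 := by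
  induction t with
  | zero => simp [traj]
  | succ t ih =>
    have h := hσ ⟨t, ht⟩
    simp only at h
    rw [traj, ih (by omega)]
    funext i
    simp only [Matrix.mulVec, dotProduct]
    rw [Finset.sum_eq_single (⟨t, by omega⟩ : Fin (k + 1))]
    · have ht' : t < k := ht
      simp only [Amat, Ahat, Matrix.smul_apply, Matrix.of_apply, smul_eq_mul, if_true]
      by_cases hi : (i : ℕ) = t + 1
      · rw [if_pos ⟨ht', h.symm, hi⟩, if_pos hi]
        ring
      · rw [if_neg (fun ⟨_, _, h3⟩ => hi h3), if_neg hi]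
        ring
    · intro b _ hb
      have : (b : ℕ) ≠ t := fun hh => hb (Fin.ext hh)
      simp [this]
    · intro hh
      exact absurd (Finset.mem_univ _) hh

/-- for the constructed system, the initial state
`x0 = (1/2^k) e_1` lies in `X0 = {x : ∑ x[i]² ≤ 1/4^k}`, and under any
switching sequence whose first `k` letters are `w`, the trajectory satisfies
`x(k) = e_{k+1}`, hence `x(k) ∈ Xu = {x : ∑ x[i]² ≥ 1}` and the system
violates `Safe(X0, Xu)`. -/
theorem constructed_system_unsafe {k : ℕ} (hk : 1 ≤ k) {A : Type}
    (w : Fin k → A) (σ : ℕ → A) (hσ : ∀ i : Fin k, σ (i : ℕ) = w i)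
    (x0 : Fin (k + 1) → ℝ)
    (hx0 : x0 = fun i : Fin (k + 1) => if (i : ℕ) = 0 then (1 : ℝ) / 2 ^ k else 0) :
    (∑ i, x0 i ^ 2 ≤ 1 / 4 ^ k) ∧
    (traj (fun s x => Amat w (σ s) *ᵥ x) x0 k
      = fun i : Fin (k + 1) => if (i : ℕ) = k then (1 : ℝ) else 0) ∧
    (1 ≤ ∑ i, (traj (fun s x => Amat w (σ s) *ᵥ x) x0 k) i ^ 2) ∧
    ¬ (∀ y0 : Fin (k + 1) → ℝ, (∑ i, y0 i ^ 2 ≤ 1 / 4 ^ k) →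
        ∀ τ : ℕ → A, ∀ t : ℕ,
          ¬ (1 ≤ ∑ i, (traj (fun s x => Amat w (τ s) *ᵥ x) y0 t) i ^ 2)) := by
  have h1 : ∑ i, x0 i ^ 2 ≤ 1 / 4 ^ k := by
    rw [hx0, Finset.sum_eq_single (0 : Fin (k + 1))]
    · simp only [Fin.val_zero, if_true]
      rw [div_pow, one_pow, ← pow_mul, mul_comm k 2, pow_mul]
      norm_num
    · intro b _ hb
      have : (b : ℕ) ≠ 0 := fun hh => hb (Fin.ext hh)
      simp [this]
    · intro hh
      exact absurd (Finset.mem_univ _) hh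
  have h2 : traj (fun s x => Amat w (σ s) *ᵥ x) x0 k
      = fun i : Fin (k + 1) => if (i : ℕ) = k then (1 : ℝ) else 0 := by
    rw [hx0, traj_step_aux w σ hσ k le_rfl, div_self (by positivity)]
  have h3 : 1 ≤ ∑ i, (traj (fun s x => Amat w (σ s) *ᵥ x) x0 k) i ^ 2 := by
    rw [h2]
    have := Finset.single_le_sum
      (f := fun i : Fin (k + 1) => (if (i : ℕ) = k then (1 : ℝ) else 0) ^ 2)
      (fun i _ => sq_nonneg _) (Finset.mem_univ (Fin.last k))
    simpa using this
  exact ⟨h1, h2, h3, fun h => h x0 h1 σ k h3⟩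
end

section
/- Let σ_k = (σ0,…,σ_{k−1}) ∈ Σ^k and let A_σ = 2Â_σ be the constructed matrices in dimension n = k+1. For any l ≥ 1 and any finite sequence σ'_l = (σ'_0,…,σ'_{l−1}) ∈ Σ^l, the matrix product A_{σ'_{l−1}} ⋯ A_{σ'_0} is nonzero if and only if σ'_l is a contiguous factor of σ_k, i.e., there exists an index 0 ≤ j with j + l ≤ k such that σ'_i = σ_{j+i} for all 0 ≤ i ≤ l−1. -/
open Matrix

/-- The matrix product `A_{s_{l-1}} ⋯ A_{s_0}` along a word `s ∈ Σ^l`. -/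
noncomputable def prodA {k : ℕ} {A : Type} (w : Fin k → A) :
    (l : ℕ) → (Fin l → A) → Matrix (Fin (k + 1)) (Fin (k + 1)) ℝ
  | 0, _ => 1
  | l + 1, s => Amat w (s (Fin.last l)) * prodA w l (fun i => s i.castSucc)

lemma Amat_nonneg {k : ℕ} {A : Type} (w : Fin k → A) (σ : A) (p q : Fin (k + 1)) :
    0 ≤ Amat w σ p q := by
  simp only [Amat, Ahat, Matrix.smul_apply, Matrix.of_apply, smul_eq_mul]
  split_ifs <;> norm_num

lemma Amat_ne_zero {k : ℕ} {A : Type} (w : Fin k → A) (σ : A) (p q : Fin (k + 1)) :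
    Amat w σ p q ≠ 0 ↔
      ∃ hj : (q : ℕ) < k, w ⟨(q : ℕ), hj⟩ = σ ∧ (p : ℕ) = (q : ℕ) + 1 := by
  simp only [Amat, Ahat, Matrix.smul_apply, Matrix.of_apply, smul_eq_mul]
  split_ifs with h
  · simp only [h, iff_true]; norm_num
  · simp only [h, iff_false]; norm_num

lemma prodA_nonneg {k : ℕ} {A : Type} (w : Fin k → A) (l : ℕ) (s : Fin l → A)
    (p q : Fin (k + 1)) : 0 ≤ prodA w l s p q := by
  induction l generalizing p with
  | zero =>
    simp only [prodA, Matrix.one_apply]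
    split_ifs <;> norm_num
  | succ l ih =>
    simp only [prodA, Matrix.mul_apply]
    exact Finset.sum_nonneg fun r _ => mul_nonneg (Amat_nonneg _ _ _ _) (ih _ _)

lemma prodA_entry {k : ℕ} {A : Type} (w : Fin k → A) (l : ℕ) (s : Fin l → A)
    (p q : Fin (k + 1)) : prodA w l s p q ≠ 0 ↔
      (p : ℕ) = q + l ∧ ∃ h : (q : ℕ) + l ≤ k,
        ∀ i : Fin l, s i = w ⟨(q : ℕ) + (i : ℕ), by have := i.isLt; omega⟩ := by
  induction l generalizing p with
  | zero =>
    have := q.isLt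
    simp only [prodA, Matrix.one_apply]
    constructor
    · intro h
      have hpq : p = q := by
        by_contra hne
        simp [hne] at h
      subst hpq
      exact ⟨rfl, by omega, fun i => i.elim0⟩
    · rintro ⟨h, -⟩
      have : p = q := Fin.ext h
      simp [this]
  | succ l ih =>
    have key : prodA w (l + 1) s p q ≠ 0 ↔ ∃ r, Amat w (s (Fin.last l)) p r ≠ 0 ∧
        prodA w l (fun i => s i.castSucc) r q ≠ 0 := by
      simp only [prodA, Matrix.mul_apply]
      rw [Ne, Finset.sum_eq_zero_iff_of_nonneg
        (fun r _ => mul_nonneg (Amat_nonneg _ _ _ _) (prodA_nonneg _ _ _ _ _))]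
      simp
    rw [key]
    constructor
    · rintro ⟨r, h1, h2⟩
      obtain ⟨hr, hw, hp⟩ := (Amat_ne_zero _ _ _ _).1 h1
      obtain ⟨hrq, hl, hs⟩ := (ih _ _).1 h2
      refine ⟨by omega, by omega, fun i => ?_⟩
      induction i using Fin.lastCases with
      | last =>
        rw [← hw]
        congr 1
        exact Fin.ext hrq
      | cast i => exact hs i
    · rintro ⟨hp, hl, hs⟩
      refine ⟨⟨q + l, by omega⟩, (Amat_ne_zero _ _ _ _).2 ⟨by simp; omega, ?_, ?_⟩,
        (ih _ _).2 ⟨rfl, by omega, fun i => hs i.castSucc⟩⟩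
      · exact (hs (Fin.last l)).symm
      · simp; omega

/-- for any `l ≥ 1` and any word `s ∈ Σ^l`, the product
`A_{s_{l-1}} ⋯ A_{s_0}` is nonzero iff `s` is a contiguous factor of `w`. -/
theorem prod_ne_zero_iff_factor {k : ℕ} {A : Type} (w : Fin k → A)
    (l : ℕ) (hl : 1 ≤ l) (s : Fin l → A) :
    prodA w l s ≠ 0 ↔
      ∃ j : ℕ, ∃ h : j + l ≤ k,
        ∀ i : Fin l, s i = w ⟨j + (i : ℕ), by have := i.isLt; omega⟩ := by
  constructor
  · intro h
    have : ∃ p q, prodA w l s p q ≠ 0 := by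
      by_contra hc
      push Not at hc
      exact h (by ext p q; exact hc p q)
    obtain ⟨p, q, hpq⟩ := this
    obtain ⟨-, h', hs⟩ := (prodA_entry _ _ _ _ _).1 hpq
    exact ⟨q, h', hs⟩
  · rintro ⟨j, h, hs⟩ h0
    refine (prodA_entry w l s ⟨j + l, by omega⟩ ⟨j, by omega⟩).2 ⟨rfl, h, hs⟩ ?_
    rw [h0]
    rfl
end

section
/- Let G = (V, E) be a graph over Σ, let σ_k ∈ Σ^k, let A_σ = 2Â_σ be the constructed matrices in dimension n = k+1, let X0 = {x ∈ ℝ^n : Σ_{i=1}^n x[i]² ≤ 1/4^k} and Xu = {x ∈ ℝ^n : Σ_{i=1}^n x[i]² ≥ 1}, and for each v ∈ V let B_v(x) = Σ_{i=1}^n p_v[i] x[i]² − 1 with coefficients satisfying 1 < p_v[i] ≤ 4^k for all v ∈ V and 1 ≤ i ≤ n. Then: (a) B_v(x) ≤ 0 for all x ∈ X0 and all v ∈ V; (b) B_v(x) > 0 for all x ∈ Xu and all v ∈ V; and (c) the condition that B_{v'}(A_σ x) ≤ B_v(x) for all x ∈ ℝ^n and all (v, σ, v') ∈ E holds if and only if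 the componentwise vector inequality 4 Â_σ^⊤ p_{v'} ≤ p_v holds for all (v, σ, v') ∈ E. -/
open Matrix

theorem Ahat_zero_row {k : ℕ} {A : Type} (w : Fin k → A) (σ : A) (j : Fin (k + 1)) :
    Ahat w σ 0 j = 0 := by
  simp [Ahat]

open scoped Classical in
theorem Ahat_succ_row {k : ℕ} {A : Type} (w : Fin k → A) (σ : A) (m : Fin k)
    (j : Fin (k + 1)) :
    Ahat w σ m.succ j = if j = m.castSucc then (if w m = σ then 1 else 0) else 0 := by
  unfold Ahat
  rw [Matrix.of_apply]
  by_cases hj : j = m.castSucc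
  · subst hj
    simp
  · rw [if_neg hj, if_neg]
    rintro ⟨h1, h2, h3⟩
    apply hj
    ext
    simp at h3 ⊢
    omega

theorem Ahat_mulVec_sq {k : ℕ} {A : Type} (w : Fin k → A) (σ : A)
    (x : Fin (k + 1) → ℝ) (i : Fin (k + 1)) :
    (Ahat w σ *ᵥ x) i ^ 2 = ∑ j, Ahat w σ i j * x j ^ 2 := by
  classical
  simp only [Matrix.mulVec, dotProduct]
  refine Fin.cases ?_ (fun m => ?_) i
  · simp [Ahat_zero_row]
  · simp only [Ahat_succ_row, ite_mul, zero_mul, one_mul, Finset.sum_ite_eq', Finset.mem_univ, if_true]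
    split_ifs <;> simp

theorem quad_eq {k : ℕ} {A : Type} (w : Fin k → A) (σ : A)
    (q x : Fin (k + 1) → ℝ) :
    ∑ i, q i * (Amat w σ *ᵥ x) i ^ 2 = ∑ j, 4 * ((Ahat w σ)ᵀ *ᵥ q) j * x j ^ 2 := by
  have h : ∀ i, q i * (Amat w σ *ᵥ x) i ^ 2 = ∑ j, 4 * (Ahat w σ i j * q i) * x j ^ 2 := by
    intro i
    rw [Amat, Matrix.smul_mulVec, Pi.smul_apply, smul_eq_mul, mul_pow, Ahat_mulVec_sq,
      Finset.mul_sum, Finset.mul_sum]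
    exact Finset.sum_congr rfl fun j _ => by ring
  simp only [h]
  rw [Finset.sum_comm]
  refine Finset.sum_congr rfl fun j _ => ?_
  simp only [Matrix.mulVec, dotProduct, Matrix.transpose_apply, Finset.mul_sum, Finset.sum_mul]

/-- with `B_v(x) = ∑ᵢ p_v[i] x[i]² − 1` and `1 < p_v[i] ≤ 4^k`:
(a) `B_v ≤ 0` on `X0 = {x : ∑ x[i]² ≤ 1/4^k}`;
(b) `B_v > 0` on `Xu = {x : ∑ x[i]² ≥ 1}`;
(c) the edge decrease conditions `B_{v'}(A_σ x) ≤ B_v(x)` (for all `x` and all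
edges) hold iff the componentwise inequalities `4 Â_σᵀ p_{v'} ≤ p_v` hold for
all edges. -/
theorem barrier_conditions_iff_vector_ineq {k : ℕ} {A V : Type} [Fintype V]
    (E : Set (V × A × V)) (w : Fin k → A)
    (p : V → Fin (k + 1) → ℝ)
    (hp : ∀ (v : V) (i : Fin (k + 1)), 1 < p v i ∧ p v i ≤ 4 ^ k) :
    (∀ v : V, ∀ x : Fin (k + 1) → ℝ, (∑ i, x i ^ 2 ≤ 1 / 4 ^ k) →
        (∑ i, p v i * x i ^ 2) - 1 ≤ 0) ∧
    (∀ v : V, ∀ x : Fin (k + 1) → ℝ, (1 ≤ ∑ i, x i ^ 2) →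
        0 < (∑ i, p v i * x i ^ 2) - 1) ∧
    ((∀ e ∈ E, ∀ x : Fin (k + 1) → ℝ,
        (∑ i, p e.2.2 i * (Amat w e.2.1 *ᵥ x) i ^ 2) - 1
          ≤ (∑ i, p e.1 i * x i ^ 2) - 1) ↔
      (∀ e ∈ E, ∀ i : Fin (k + 1),
        4 * ((Ahat w e.2.1)ᵀ *ᵥ p e.2.2) i ≤ p e.1 i)) := by
  refine ⟨fun v x hx => ?_, fun v x hx => ?_, fun H e he i => ?_, fun H e he x => ?_⟩
  · have h1 : ∑ i, p v i * x i ^ 2 ≤ ∑ i, 4 ^ k * x i ^ 2 :=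
      Finset.sum_le_sum fun i _ => mul_le_mul_of_nonneg_right (hp v i).2 (sq_nonneg _)
    rw [← Finset.mul_sum] at h1
    rw [le_div_iff₀ (by positivity)] at hx
    linarith
  · have h0 : ∃ i, x i ≠ 0 := by
      by_contra! h
      simp [h] at hx
      linarith
    obtain ⟨i, hi⟩ := h0
    have h1 : ∑ i, x i ^ 2 < ∑ i, p v i * x i ^ 2 := by
      refine Finset.sum_lt_sum (fun j _ => ?_) ⟨i, Finset.mem_univ _, ?_⟩
      · nlinarith [(hp v j).1, sq_nonneg (x j)]
      · have : 0 < x i ^ 2 := by positivity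
        nlinarith [(hp v i).1]
    linarith
  · have h := H e he (Pi.single i 1)
    rw [quad_eq] at h
    simpa [Pi.single_apply] using h
  · rw [quad_eq]
    refine sub_le_sub_right (Finset.sum_le_sum fun j _ => ?_) 1
    exact mul_le_mul_of_nonneg_right (H e he j) (sq_nonneg _)
end

section
/- Let G_np = (V_np, E_np) be a graph over Σ that fails to accept the finite sequence σ_k ∈ Σ^k, and let A_σ = 2Â_σ be the constructed matrices in dimension n = k+1. Define the auxiliary directed graph Ĝ_np with vertex set V_np × {1,…,n} and an edge from (v, i) to (v', i') if and only if (v, σ, v') ∈ E_np for some σ ∈ Σ and A_σ[i', i] ≠ 0. Then Ĝ_np is acyclic (contains no directed cycle) and every directed path in Ĝ_np has at most k−1 edges. -/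
open Matrix

/-- Edge relation of the auxiliary graph `Ĝ` on `V × {1,…,n}`: there is an edge
from `(v, i)` to `(v', i')` iff `(v, σ, v') ∈ E` for some `σ` and
`A_σ[i', i] ≠ 0`. -/
noncomputable def AuxRel {k : ℕ} {V A : Type} (E : Set (V × A × V))
    (w : Fin k → A) : (V × Fin (k + 1)) → (V × Fin (k + 1)) → Prop :=
  fun a b => ∃ σ : A, (a.1, σ, b.1) ∈ E ∧ Amat w σ b.2 a.2 ≠ 0

theorem auxRel_iff_helper {k : ℕ} {V A : Type} {E : Set (V × A × V)} {w : Fin k → A}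
    {a b : V × Fin (k + 1)} (h : AuxRel E w a b) :
    (b.2 : ℕ) = (a.2 : ℕ) + 1 ∧ ∀ j : Fin k, (j : ℕ) = a.2 → (a.1, w j, b.1) ∈ E := by
  obtain ⟨σ, hE, hA⟩ := h
  have hc : ∃ hj : (a.2 : ℕ) < k, w ⟨(a.2 : ℕ), hj⟩ = σ ∧ (b.2 : ℕ) = (a.2 : ℕ) + 1 := by
    by_contra hc
    apply hA
    simp only [Amat, Ahat, Matrix.smul_apply, Matrix.of_apply]
    rw [if_neg hc]
    simp
  obtain ⟨hj, hw, hi⟩ := hc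
  refine ⟨hi, fun j hja => ?_⟩
  have : j = ⟨(a.2 : ℕ), hj⟩ := Fin.ext hja
  rw [this, hw]
  exact hE

theorem auxPath_level_helper {k l : ℕ} {V A : Type} {E : Set (V × A × V)} {w : Fin k → A}
    {p : Fin (l + 1) → V × Fin (k + 1)}
    (h : ∀ i : Fin l, AuxRel E w (p i.castSucc) (p i.succ)) (i : Fin (l + 1)) :
    ((p i).2 : ℕ) = ((p 0).2 : ℕ) + i := by
  induction i using Fin.induction with
  | zero => simp
  | succ i ih =>
    rw [(auxRel_iff_helper (h i)).1, ih]
    simp [add_assoc]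

/-- if the graph `(V, E)` fails to accept the word `w ∈ Σ^k`,
then the auxiliary graph `Ĝ` is acyclic and every directed path in `Ĝ` has
at most `k − 1` edges. -/
theorem aux_graph_acyclic_short_paths {k : ℕ} (hk : 1 ≤ k) {V A : Type}
    [Fintype V] (E : Set (V × A × V)) (w : Fin k → A)
    (hna : ¬ ∃ v : Fin (k + 1) → V, ∀ i : Fin k, (v i.castSucc, w i, v i.succ) ∈ E) :
    (∀ l : ℕ, 1 ≤ l → ∀ p : Fin (l + 1) → V × Fin (k + 1),
      (∀ i : Fin l, AuxRel E w (p i.castSucc) (p i.succ)) →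
      p 0 ≠ p (Fin.last l)) ∧
    (∀ l : ℕ, ∀ p : Fin (l + 1) → V × Fin (k + 1),
      (∀ i : Fin l, AuxRel E w (p i.castSucc) (p i.succ)) → l ≤ k - 1) := by
  constructor
  · intro l hl p h heq
    have := auxPath_level_helper h (Fin.last l)
    rw [← heq] at this
    simp at this
    omega
  · intro l p h
    have hlast := auxPath_level_helper h (Fin.last l)
    have hlt := (p (Fin.last l)).2.isLt
    simp only [Fin.val_last] at hlast
    by_contra hcon
    have hlk : l = k := by omega
    subst hlk
    apply hna
    refine ⟨fun i => (p i).1, fun i => (auxRel_iff_helper (h i)).2 i ?_⟩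
    have := auxPath_level_helper h i.castSucc
    simp only [Fin.val_castSucc] at this
    omega
end

section
/- Let G_np = (V_np, E_np) be a graph over Σ that fails to accept the finite sequence σ_k ∈ Σ^k, and let Â_σ be the constructed binary matrices in dimension n = k+1. Then there exist vectors p_v ∈ ℝ^n, v ∈ V_np, with 4 ≤ p_v[i] ≤ 4^k for all v ∈ V_np and 1 ≤ i ≤ n, such that the componentwise vector inequality 4 Â_σ^⊤ p_{v'} ≤ p_v holds for every edge (v, σ, v') ∈ E_np. -/
open Matrix

/-- There is a path of length `m` from `v` reading `w j, w (j+1), …`. -/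
def ReadsFrom {k : ℕ} {V A : Type} (E : Set (V × A × V)) (w : Fin k → A)
    (j : ℕ) (v : V) (m : ℕ) : Prop :=
  ∃ u : ℕ → V, u 0 = v ∧ ∀ i < m, ∃ h : j + i < k, (u i, w ⟨j + i, h⟩, u (i + 1)) ∈ E

theorem ReadsFrom.cons {k : ℕ} {V A : Type} {E : Set (V × A × V)} {w : Fin k → A}
    {j m : ℕ} {v v' : V} (hj : j < k) (he : (v, w ⟨j, hj⟩, v') ∈ E)
    (h : ReadsFrom E w (j + 1) v' m) : ReadsFrom E w j v (m + 1) := by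
  obtain ⟨u, hu0, hu⟩ := h
  refine ⟨fun n => Nat.casesOn n v u, rfl, ?_⟩
  intro i hi
  cases i with
  | zero => exact ⟨hj, by simpa [hu0] using he⟩
  | succ i =>
    obtain ⟨h1, h2⟩ := hu i (by omega)
    refine ⟨by omega, ?_⟩
    have h3 : (⟨j + (i + 1), by omega⟩ : Fin k) = ⟨j + 1 + i, h1⟩ := Fin.ext (by simp; omega)
    rw [h3]
    exact h2

theorem ReadsFrom.bound {k : ℕ} {V A : Type} {E : Set (V × A × V)} {w : Fin k → A}
    (hna : ¬ ∃ v : Fin (k + 1) → V, ∀ i : Fin k, (v i.castSucc, w i, v i.succ) ∈ E)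
    {j m : ℕ} {v : V} (h : ReadsFrom E w j v (m + 1)) : m + 1 ≤ k - 1 := by
  obtain ⟨u, hu0, hu⟩ := h
  obtain ⟨h1, -⟩ := hu m (by omega)
  by_contra hc
  have hj : j = 0 := by omega
  have hm : m + 1 = k := by omega
  subst hj
  apply hna
  refine ⟨fun i => u i, fun i => ?_⟩
  obtain ⟨h2, h3⟩ := hu i (by omega)
  have h4 : (⟨0 + (i : ℕ), h2⟩ : Fin k) = i := Fin.ext (by simp)
  rw [h4] at h3
  simpa using h3

/-- if the graph `(V, E)` fails to accept the word `w ∈ Σ^k`,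
then there exist vectors `p_v ∈ ℝ^{k+1}` with `4 ≤ p_v[i] ≤ 4^k` such that
the componentwise inequality `4 Â_σᵀ p_{v'} ≤ p_v` holds for every edge
`(v, σ, v') ∈ E`. -/
theorem exists_admissible_coefficients {k : ℕ} (hk : 1 ≤ k) {V A : Type}
    [Fintype V] (E : Set (V × A × V)) (w : Fin k → A)
    (hna : ¬ ∃ v : Fin (k + 1) → V, ∀ i : Fin k, (v i.castSucc, w i, v i.succ) ∈ E) :
    ∃ p : V → Fin (k + 1) → ℝ,
      (∀ (v : V) (i : Fin (k + 1)), 4 ≤ p v i ∧ p v i ≤ 4 ^ k) ∧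
      (∀ e ∈ E, ∀ i : Fin (k + 1),
        4 * ((Ahat w e.2.1)ᵀ *ᵥ p e.2.2) i ≤ p e.1 i) := by
  classical
  let L : V → ℕ → ℕ := fun v j => Nat.findGreatest (ReadsFrom E w j v) (k - 1)
  have hL : ∀ v j, L v j ≤ k - 1 := fun v j => Nat.findGreatest_le _
  refine ⟨fun v i => 4 ^ (L v i + 1), ?_, ?_⟩
  · intro v i
    constructor
    · have : (1 : ℝ) ≤ 4 ^ (L v i) := one_le_pow₀ (by norm_num)
      simp only [pow_succ]
      linarith
    · exact pow_le_pow_right₀ (by norm_num) (by have := hL v i; omega)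
  · rintro ⟨v, σ, v'⟩ he i
    simp only [Matrix.mulVec, dotProduct, Matrix.transpose_apply, Ahat, Matrix.of_apply]
    by_cases hi : ∃ hj : (i : ℕ) < k, w ⟨(i : ℕ), hj⟩ = σ
    · obtain ⟨hj, hw⟩ := hi
      rw [Finset.sum_eq_single (⟨(i : ℕ) + 1, by omega⟩ : Fin (k + 1))]
      · rw [if_pos ⟨hj, hw, rfl⟩, one_mul, mul_comm, ← pow_succ]
        apply pow_le_pow_right₀ (by norm_num)
        have h0 : ReadsFrom E w ((i : ℕ) + 1) v' (L v' ((i : ℕ) + 1)) :=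
          Nat.findGreatest_spec (P := ReadsFrom E w ((i : ℕ) + 1) v') (Nat.zero_le _)
            ⟨fun _ => v', rfl, fun i hi => absurd hi (by omega)⟩
        have h1 := h0.cons (v := v) hj (by rw [hw]; exact he)
        have h2 : L v' ((i : ℕ) + 1) + 1 ≤ L v i :=
          Nat.le_findGreatest (ReadsFrom.bound hna h1) h1
        simpa using h2
      · intro b _ hb
        rw [if_neg, zero_mul]
        rintro ⟨_, _, h⟩
        exact hb (Fin.ext h)
      · simp
    · rw [Finset.sum_eq_zero]
      · rw [mul_zero]; positivity
      · intro b _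
        rw [if_neg, zero_mul]
        rintro ⟨h, h', _⟩
        exact hi ⟨h, h'⟩
end

section
/- For any graph G = (V, E) over a finite alphabet Σ, there exist a dimension n, a discrete-time switched system S over Σ on X = ℝ^n with linear modes f_σ(x) = A_σ x, sets X0, Xu ⊆ ℝ^n, and functions B_v : ℝ^n → ℝ, v ∈ V, such that: (i) B_v(x) ≤ 0 for all x ∈ X0 and v ∈ V; (ii) B_v(x) > 0 for all x ∈ Xu and v ∈ V; (iii) for every (v, σ, v') ∈ E, B_{v'}(f_σ(x)) ≤ B_v(x) for all x ∈ ℝ^n; and (iv) for every triple (v, σ, v') ∈ (V × Σ × V) \ E, there exists x ∈ ℝ^n with B_{v'}(f_σ(x)) > B_v(x). -/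
open Matrix

/-- The linear mode on `ℝ^(Option A × V)`: it copies block `none` to block `some a`
and kills everything else. -/
def modeL (V A : Type) [DecidableEq A] (a : A) :
    (Option A × V → ℝ) →ₗ[ℝ] (Option A × V → ℝ) where
  toFun x := fun p => if p.1 = some a then x (none, p.2) else 0
  map_add' x y := by
    funext p
    by_cases h : p.1 = some a <;> simp [h]
  map_smul' c x := by
    funext p
    by_cases h : p.1 = some a <;> simp [h]

/-- Positive region of the `w`-th barrier. -/
def posReg {V A : Type} [DecidableEq A] [DecidableEq V] (E : Set (V × A × V)) (w : V)
    (x : Option A × V → ℝ) : Prop :=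
  (∃ u, u ≠ w ∧ ∀ t, x (none, t) = if t = u then 1 else 0) ∨
  (∃ u a, (u, a, w) ∉ E ∧ ∀ p, x p = if p = (some a, u) then 1 else 0)

theorem posReg_edge {V A : Type} [DecidableEq A] [DecidableEq V] (E : Set (V × A × V))
    (v w : V) (a : A) (h : (v, a, w) ∈ E) (x : Option A × V → ℝ)
    (hx : posReg E w (modeL V A a x)) : posReg E v x := by
  rcases hx with ⟨u, _, hu⟩ | ⟨u, b, hub, hb⟩
  · have := hu u
    simp [modeL] at this
  · have hab : b = a := by
      by_contra hne
      have := hb (some b, u)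
      simp [modeL, hne] at this
    subst hab
    refine Or.inl ⟨u, ?_, fun t => ?_⟩
    · rintro rfl
      exact hub h
    · have := hb (some b, t)
      simpa [modeL] using this

theorem posReg_nonedge {V A : Type} [DecidableEq A] [DecidableEq V] (E : Set (V × A × V))
    (v w : V) (a : A) (h : (v, a, w) ∉ E) :
    ∃ x : Option A × V → ℝ, ¬ posReg E v x ∧ posReg E w (modeL V A a x) := by
  refine ⟨fun p => if p = (none, v) then 1 else 0, ?_, Or.inr ⟨v, a, h, ?_⟩⟩
  · rintro (⟨u, huv, hu⟩ | ⟨u, b, _, hb⟩)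
    · have := hu u
      simp [huv] at this
    · have := hb (none, v)
      simp at this
  · rintro ⟨o, t⟩
    by_cases ho : o = some a <;> simp [modeL, ho]

/-- key lemma for the ordering result: for any graph `(V, E)`
over a finite alphabet, there exist a dimension `n`, a switched linear system
with modes `f_σ(x) = A_σ x` on `ℝⁿ`, sets `X0, Xu ⊆ ℝⁿ`, and functions
`B_v : ℝⁿ → ℝ` such that (i) `B_v ≤ 0` on `X0`; (ii) `B_v > 0` on `Xu`;
(iii) the decrease condition holds along every edge of `E`; and (iv) the
decrease condition fails for every triple `(v, σ, v') ∉ E`. -/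
theorem exists_separating_barrier {V A : Type} [Fintype V] [Fintype A]
    (E : Set (V × A × V)) :
    ∃ (n : ℕ) (M : A → Matrix (Fin n) (Fin n) ℝ)
      (X0 Xu : Set (Fin n → ℝ)) (B : V → (Fin n → ℝ) → ℝ),
      (∀ v : V, ∀ x ∈ X0, B v x ≤ 0) ∧
      (∀ v : V, ∀ x ∈ Xu, 0 < B v x) ∧
      (∀ e ∈ E, ∀ x : Fin n → ℝ, B e.2.2 (M e.2.1 *ᵥ x) ≤ B e.1 x) ∧
      (∀ e : V × A × V, e ∉ E →
        ∃ x : Fin n → ℝ, B e.1 x < B e.2.2 (M e.2.1 *ᵥ x)) := by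
  classical
  let e := Fintype.equivFin (Option A × V)
  let F := LinearEquiv.funCongrLeft ℝ ℝ e
  let M : A → Matrix (Fin _) (Fin _) ℝ := fun a =>
    LinearMap.toMatrix' (F.symm.toLinearMap ∘ₗ modeL V A a ∘ₗ F.toLinearMap)
  have hM : ∀ a x, F (M a *ᵥ x) = modeL V A a (F x) := by
    intro a x
    simp only [M, LinearMap.toMatrix'_mulVec, LinearMap.comp_apply, LinearEquiv.coe_coe,
      LinearEquiv.apply_symm_apply]
  let B : V → (Fin (Fintype.card (Option A × V)) → ℝ) → ℝ := fun v x =>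
    if posReg E v (F x) then 1 else 0
  refine ⟨_, M, {x | ∀ v, B v x ≤ 0}, {x | ∀ v, 0 < B v x}, B,
    fun v x hx => hx v, fun v x hx => hx v, ?_, ?_⟩
  · rintro ⟨v, a, w⟩ h x
    have := posReg_edge E v w a h (F x)
    simp only [B, hM]
    split_ifs with h1 h2
    · exact le_rfl
    · exact absurd (this h1) h2
    · exact zero_le_one
    · exact le_rfl
  · rintro ⟨v, a, w⟩ h
    obtain ⟨x, h1, h2⟩ := posReg_nonedge E v w a h
    refine ⟨F.symm x, ?_⟩
    simp only [B, hM, LinearEquiv.apply_symm_apply, if_neg h1, if_pos h2]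
    exact zero_lt_one
end

section
/- Let G = (V, E) and Ḡ = (V̄, Ē) be path-complete graphs over the same finite alphabet Σ. If G ⪯ Ḡ (in the ordering of path-complete barrier functions), then G simulates Ḡ, i.e., there exists a function R : V̄ → V such that (v̄, σ, v̄') ∈ Ē implies (R(v̄), σ, R(v̄')) ∈ E. -/
/-- A graph `(V, E)` over the alphabet `A` is path-complete if every finite
word of every length `k ≥ 1` is accepted by the graph. -/
def PathComplete {V A : Type} (E : Set (V × A × V)) : Prop :=
  ∀ k : ℕ, 1 ≤ k → ∀ w : Fin k → A,
    ∃ v : Fin (k + 1) → V, ∀ i : Fin k, (v i.castSucc, w i, v i.succ) ∈ E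

/-- `{B_v}` is a graph-based barrier function for the switched system with
modes `f σ` on `ℝⁿ` and the sets `X0`, `Xu`, on the graph `(V, E)`. -/
def GraphBarrier {V A : Type} {n : ℕ} (E : Set (V × A × V))
    (f : A → (Fin n → ℝ) → (Fin n → ℝ)) (X0 Xu : Set (Fin n → ℝ))
    (B : V → (Fin n → ℝ) → ℝ) : Prop :=
  (∀ v : V, ∀ x ∈ X0, B v x ≤ 0) ∧
  (∀ v : V, ∀ x ∈ Xu, 0 < B v x) ∧
  (∀ e ∈ E, ∀ x : Fin n → ℝ, B e.2.2 (f e.2.1 x) ≤ B e.1 x)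

/-- The ordering `G ⪯ Ḡ` of path-complete graphs: for every dimension `n`,
every switched system over the alphabet on `ℝⁿ`, every pair of sets
`X0, Xu ⊆ ℝⁿ` and every template `T`, the existence of a barrier function on
`G` within `T` implies the existence of one on `Ḡ` within `T`. -/
def PCOrder {V V' A : Type} (E : Set (V × A × V)) (E' : Set (V' × A × V')) : Prop :=
  ∀ (n : ℕ) (f : A → (Fin n → ℝ) → (Fin n → ℝ))
    (X0 Xu : Set (Fin n → ℝ)) (T : Set ((Fin n → ℝ) → ℝ)),
    (∃ B : V → (Fin n → ℝ) → ℝ, (∀ v : V, B v ∈ T) ∧ GraphBarrier E f X0 Xu B) →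
    (∃ B' : V' → (Fin n → ℝ) → ℝ, (∀ v' : V', B' v' ∈ T) ∧ GraphBarrier E' f X0 Xu B')

/-- if `G` and `Ḡ` are path-complete graphs over the same finite
alphabet and `G ⪯ Ḡ` in the ordering of path-complete barrier functions, then
`G` simulates `Ḡ`, i.e. there is `R : V̄ → V` with
`(v̄, σ, v̄') ∈ Ē → (R v̄, σ, R v̄') ∈ E`. -/
theorem order_implies_simulation {V V' A : Type}
    [Fintype V] [Fintype V'] [Fintype A]
    (E : Set (V × A × V)) (E' : Set (V' × A × V'))
    (hG : PathComplete E) (hG' : PathComplete E')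
    (hord : PCOrder E E') :
    ∃ R : V' → V, ∀ e ∈ E', (R e.1, e.2.1, R e.2.2) ∈ E := by
  classical
  -- abstract finite state space: a sink, and a source and a target per non-edge
  let S := Option (Bool × V × A × V)
  let F : A → S → S := fun σ s => match s with
    | none => none
    | some (true, p) => if p ∉ E ∧ p.2.1 = σ then some (false, p) else none
    | some (false, _) => none
  let b : V → S → ℝ := fun v s => match s with
    | none => -1
    | some (true, p) => if v = p.1 then 0 else 1
    | some (false, p) => if v = p.2.2 then 1 else 0
  have hb : ∀ v s, -1 ≤ b v s := by
    rintro v (_ | ⟨_ | _, p⟩) <;> simp only [b] <;> (try split_ifs) <;> norm_num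
  obtain ⟨c, hc⟩ := exists_injective_nat S
  let i : S → (Fin 1 → ℝ) := fun s _ => (c s : ℝ)
  have hi : Function.Injective i := by
    intro s t h
    apply hc
    have : (c s : ℝ) = (c t : ℝ) := congrFun h 0
    exact_mod_cast this
  have : Nonempty S := ⟨none⟩
  let g : (Fin 1 → ℝ) → S := Function.invFun i
  have hg : ∀ s, g (i s) = s := Function.leftInverse_invFun hi
  obtain ⟨B', hT, -, -, h3⟩ := hord 1 (fun σ x => i (F σ (g x))) ∅ ∅
    (Set.range fun v x => b v (g x))
    ⟨fun v x => b v (g x), fun v => ⟨v, rfl⟩, by simp, by simp, by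
      rintro ⟨u, σ, u'⟩ he x
      simp only [hg]
      generalize g x = s
      rcases s with _ | ⟨_ | _, p⟩
      · exact hb u none
      · exact hb u (some (false, p))
      · by_cases h : p ∉ E ∧ p.2.1 = σ
        · obtain ⟨a, τ, a'⟩ := p
          obtain ⟨h1, rfl⟩ := h
          simp only [F, b, h1, not_false_eq_true, and_self, if_true]
          by_cases h2 : u = a
          · by_cases h3 : u' = a'
            · subst h2 h3
              exact absurd he h1
            · simp [h2, h3]
          · rw [if_neg h2]
            split_ifs <;> norm_num
        · have : F σ (some (true, p)) = none := by simp only [F]; rw [if_neg h]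
          rw [this]
          exact hb u (some (true, p))⟩
  choose R hR using hT
  refine ⟨R, ?_⟩
  rintro ⟨v, σ, v'⟩ he
  by_contra hn
  have := h3 _ he (i (some (true, R v, σ, R v')))
  simp only [← hR, hg] at this
  simp only [F] at this
  rw [if_pos ⟨hn, trivial⟩] at this
  simp only [b, if_true] at this
  norm_num at this
end

section
/- Let G = (V, E) and Ḡ = (V̄, Ē) be path-complete graphs over the same finite alphabet Σ. Then the following are equivalent: (1) G simulates Ḡ, i.e., there exists a function R : V̄ → V such that (v̄, σ, v̄') ∈ Ē implies (R(v̄), σ, R(v̄')) ∈ E; (2) G ⪯ Ḡ in the ordering of path-complete barrier functions. -/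
/-- for path-complete graphs `G` and `Ḡ` over the same finite
alphabet, the following are equivalent: (1) `G` simulates `Ḡ`, i.e. there is
`R : V̄ → V` with `(v̄, σ, v̄') ∈ Ē → (R v̄, σ, R v̄') ∈ E`; (2) `G ⪯ Ḡ` in the
ordering of path-complete barrier functions. -/
theorem simulation_iff_order {V V' A : Type}
    [Fintype V] [Fintype V'] [Fintype A]
    (E : Set (V × A × V)) (E' : Set (V' × A × V'))
    (hG : PathComplete E) (hG' : PathComplete E') :
    (∃ R : V' → V, ∀ e ∈ E', (R e.1, e.2.1, R e.2.2) ∈ E) ↔ PCOrder E E' := by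
  classical
  constructor
  · rintro ⟨R, hR⟩ n f X0 Xu T ⟨B, hT, h0, hu, hE⟩
    exact ⟨fun v => B (R v), fun v => hT _, fun v => h0 _, fun v => hu _,
      fun e he x => hE _ (hR e he) x⟩
  · intro h
    -- States: `none` is a sink, `inl (v, σ)` detects `v`, `inr (v, σ)` its successors.
    obtain ⟨c, hc⟩ := exists_injective_nat (Option ((V × A) ⊕ (V × A)))
    let enc : Option ((V × A) ⊕ (V × A)) → (Fin 1 → ℝ) := fun s _ => (c s : ℝ)
    have henc : Function.Injective enc := by
      intro s t hst
      have this : (c s : ℝ) = (c t : ℝ) := congrFun hst 0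
      exact hc (by exact_mod_cast this)
    let dec := Function.invFun enc
    have hdec : ∀ s, dec (enc s) = s := Function.leftInverse_invFun henc
    let F : A → Option ((V × A) ⊕ (V × A)) → Option ((V × A) ⊕ (V × A)) := fun σ s =>
      match s with
      | some (Sum.inl (v, τ)) => if τ = σ then some (Sum.inr (v, τ)) else none
      | _ => none
    let b : V → Option ((V × A) ⊕ (V × A)) → ℝ := fun u s =>
      match s with
      | none => 0
      | some (Sum.inl (v, _)) => if u = v then 0 else 1
      | some (Sum.inr (v, τ)) => if (v, τ, u) ∈ E then 0 else 1
    obtain ⟨B', hT, -, -, hE'⟩ := h 1 (fun σ x => enc (F σ (dec x))) ∅ ∅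
      (Set.range fun v x => b v (dec x))
      ⟨fun v x => b v (dec x), fun v => ⟨v, rfl⟩, by simp, by simp, by
        rintro ⟨u, σ, u'⟩ he x
        simp only [hdec]
        rcases dec x with _ | ⟨v, τ⟩ | ⟨v, τ⟩
        · simp [F, b]
        · by_cases hτ : τ = σ
          · subst hτ
            by_cases huv : u = v
            · subst huv
              simp [F, b, he]
            · simp only [F, b, huv, if_true, if_false]
              split_ifs <;> norm_num
          · simp only [F, b, hτ, if_false]
            split_ifs <;> norm_num
        · simp only [F, b]
          split_ifs <;> norm_num⟩
    choose R hR using hT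
    refine ⟨R, ?_⟩
    rintro ⟨u, σ, u'⟩ he
    have key := hE' _ he (enc (some (Sum.inl (R u, σ))))
    simp only [← hR, hdec] at key
    by_contra hne
    simp only at hne
    simp only [F, b, hne, if_true, if_false] at key
    norm_num at key
end
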